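/- arXiv:1302.3514 — 2 statements merged into one kernel-verified Lean document; each statement's English description precedes it below -/
import Mathlib

section
/- For a, a', b > 0 and real t with t + a > 0 and t + b > 0, the following ₃F₂ transformation holds: ₃F₂(a+t,a,b;t+a+b,a+a';1)/(Γ(a')Γ(a+b+t)) = ₃F₂(a',a'-t,b;a'+b,a+a';1)/(Γ(a+t)Γ(a'+b)). -/
open MeasureTheory ProbabilityTheory Real Set Filter Topology

noncomputable def gammaDens (p σ y : ℝ) : ℝ :=
  if 0 < y then σ ^ p / Real.Gamma p * Real.exp (-(σ * y)) * y ^ (p - 1) else 0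

noncomputable def gammaM (p σ : ℝ) : Measure ℝ :=
  MeasureTheory.volume.withDensity fun y => ENNReal.ofReal (gammaDens p σ y)

noncomputable def beta1Dens (p q x : ℝ) : ℝ :=
  if 0 < x ∧ x < 1 then
    Real.Gamma (p + q) / (Real.Gamma p * Real.Gamma q) * x ^ (p - 1) * (1 - x) ^ (q - 1)
  else 0

noncomputable def beta1 (p q : ℝ) : Measure ℝ :=
  MeasureTheory.volume.withDensity fun x => ENNReal.ofReal (beta1Dens p q x)

noncomputable def beta2Dens (p q y : ℝ) : ℝ :=
  if 0 < y then
    Real.Gamma (p + q) / (Real.Gamma p * Real.Gamma q) * y ^ (p - 1) * (1 + y) ^ (-(p + q))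
  else 0

noncomputable def beta2 (p q : ℝ) : Measure ℝ :=
  MeasureTheory.volume.withDensity fun y => ENNReal.ofReal (beta2Dens p q y)

/-- Pochhammer (rising factorial) symbol `(a)_n`. -/
noncomputable def poch (a : ℝ) (n : ℕ) : ℝ := ∏ i ∈ Finset.range n, (a + (i : ℝ))

/-- Gauss hypergeometric function `₂F₁(a,b;c;x)`. -/
noncomputable def F21 (a b c x : ℝ) : ℝ :=
  ∑' n : ℕ, poch a n * poch b n / ((n.factorial : ℝ) * poch c n) * x ^ n

/-- Generalized hypergeometric `₃F₂(a₁,a₂,a₃;b₁,b₂;1)` at unit argument. -/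
noncomputable def F32one (a1 a2 a3 b1 b2 : ℝ) : ℝ :=
  ∑' n : ℕ, poch a1 n * poch a2 n * poch a3 n /
    ((n.factorial : ℝ) * poch b1 n * poch b2 n)

/-- Normalizing constant of the real beta-hypergeometric distribution. -/
noncomputable def Cbh (a a' b : ℝ) : ℝ :=
  Real.Gamma (a + b) / (Real.Gamma a * Real.Gamma b * F32one a a b (a + b) (a + a'))

noncomputable def bhDens (a a' b x : ℝ) : ℝ :=
  if 0 < x ∧ x < 1 then
    Cbh a a' b * x ^ (a - 1) * (1 - x) ^ (b - 1) * F21 a b (a + a') x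
  else 0

/-- The real beta-hypergeometric distribution `μ_{a,a',b}`. -/
noncomputable def bhMeasure (a a' b : ℝ) : Measure ℝ :=
  MeasureTheory.volume.withDensity fun x => ENNReal.ofReal (bhDens a a' b x)


lemma poch_succ' (s : ℝ) (n : ℕ) : poch s (n + 1) = poch s n * (s + n) := by
  simp [poch, Finset.prod_range_succ]

lemma poch_zero' (s : ℝ) : poch s 0 = 1 := by simp [poch]

lemma poch_pos' {s : ℝ} (hs : 0 < s) (n : ℕ) : 0 < poch s n := by
  unfold poch
  exact Finset.prod_pos fun i _ => by positivity

/-- coefficients of the Gauss series -/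
noncomputable def hyp (a b c : ℝ) (n : ℕ) : ℝ :=
  poch a n * poch b n / ((n.factorial : ℝ) * poch c n)

lemma hyp_succ (a b c : ℝ) (hc : 0 < c) (n : ℕ) :
    ((n : ℝ) + 1) * (c + n) * hyp a b c (n + 1) = (a + n) * (b + n) * hyp a b c n := by
  have h1 := poch_pos' hc n
  have h2 : (0 : ℝ) < n.factorial := by positivity
  have h3 : 0 < c + n := by positivity
  unfold hyp
  rw [poch_succ', poch_succ', poch_succ', Nat.factorial_succ]
  push_cast
  field_simp

noncomputable def binc (s : ℝ) (n : ℕ) : ℝ := poch s n / (n.factorial : ℝ)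

lemma binc_succ (s : ℝ) (n : ℕ) :
    ((n : ℝ) + 1) * binc s (n + 1) = (s + n) * binc s n := by
  have h2 : (0 : ℝ) < n.factorial := by positivity
  unfold binc
  rw [poch_succ', Nat.factorial_succ]
  push_cast
  field_simp

open PowerSeries in
lemma coeff_theta (F : PowerSeries ℝ) (n : ℕ) :
    coeff n (X * d⁄dX ℝ F) = n * coeff n F := by
  cases n with
  | zero => simp
  | succ n => rw [coeff_succ_X_mul, coeff_derivative]; push_cast; ring

open PowerSeries in
lemma hyp_ode_iff (A B c : ℝ) (H : PowerSeries ℝ) :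
    (X * (1 - X) * d⁄dX ℝ (d⁄dX ℝ H) + (C c - C (A + B + 1) * X) * d⁄dX ℝ H - C (A * B) * H = 0) ↔
    ∀ n : ℕ, ((n : ℝ) + 1) * (c + n) * coeff (n + 1) H = (A + n) * (B + n) * coeff n H := by
  have e : X * (1 - X) * d⁄dX ℝ (d⁄dX ℝ H) + (C c - C (A + B + 1) * X) * d⁄dX ℝ H - C (A * B) * H
      = d⁄dX ℝ (X * d⁄dX ℝ H) + C (c - 1) * d⁄dX ℝ H
        - (X * d⁄dX ℝ (X * d⁄dX ℝ H) + C (A + B) * (X * d⁄dX ℝ H) + C (A * B) * H) := by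
    simp only [Derivation.leibniz, smul_eq_mul, derivative_X, map_add, map_sub, map_one]
    ring
  rw [e, PowerSeries.ext_iff]
  refine forall_congr' fun n => ?_
  simp only [map_sub (coeff n), map_add (coeff n), coeff_C_mul, coeff_theta, coeff_derivative, map_zero]
  push_cast
  constructor <;> intro h <;> linear_combination h

open PowerSeries in
lemma euler_coeff (a b c : ℝ) (hc : 0 < c) (n : ℕ) :
    ∑ p ∈ Finset.HasAntidiagonal.antidiagonal n, binc (a + b - c) p.1 * hyp (c - a) (c - b) c p.2 = hyp a b c n := by
  set P : PowerSeries ℝ := PowerSeries.mk (binc (a + b - c)) with hP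
  set H : PowerSeries ℝ := PowerSeries.mk (hyp (c - a) (c - b) c) with hH
  have h1 : (1 - X) * d⁄dX ℝ P = C (a + b - c) * P := by
    have : (1 - X) * d⁄dX ℝ P = d⁄dX ℝ P - X * d⁄dX ℝ P := by ring
    rw [this]
    ext n
    simp only [map_sub (coeff n), coeff_theta, coeff_derivative, coeff_C_mul, hP, coeff_mk]
    linear_combination binc_succ (a + b - c) n
  have h2 : (1 - X) * d⁄dX ℝ (d⁄dX ℝ P) - d⁄dX ℝ P = C (a + b - c) * d⁄dX ℝ P := by
    have := congrArg (d⁄dX ℝ) h1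
    simp only [Derivation.leibniz, smul_eq_mul, derivative_X, derivative_C, map_sub (d⁄dX ℝ),
      derivative_one] at this
    linear_combination this
  have h3 := (hyp_ode_iff (c - a) (c - b) c H).2 (by
    intro n
    simp only [hH, coeff_mk]
    exact hyp_succ _ _ _ hc n)
  have h4 : (1 - X) * (X * (1 - X) * d⁄dX ℝ (d⁄dX ℝ (P * H)) +
      (C c - C (a + b + 1) * X) * d⁄dX ℝ (P * H) - C (a * b) * (P * H)) = 0 := by
    simp only [Derivation.leibniz, smul_eq_mul, map_add, map_sub, map_one, map_mul] at h1 h2 h3 ⊢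
    generalize d⁄dX ℝ (d⁄dX ℝ P) = P2 at *
    generalize d⁄dX ℝ P = P1 at *
    generalize d⁄dX ℝ (d⁄dX ℝ H) = H2 at *
    generalize d⁄dX ℝ H = H1 at *
    generalize (C a : PowerSeries ℝ) = a at *
    generalize (C b : PowerSeries ℝ) = b at *
    generalize (C c : PowerSeries ℝ) = c at *
    linear_combination X * (1 - X) * H * h2 + X * H * (1 + (a + b - c)) * h1
      + 2 * X * (1 - X) * H1 * h1 + (c - (a + b + 1) * X) * H * h1
      + (1 - X) * P * h3
  have hX : (1 - X : PowerSeries ℝ) ≠ 0 := by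
    intro h
    have := congrArg (coeff 0) h
    simp at this
  have h5 := (hyp_ode_iff a b c (P * H)).1 ((mul_eq_zero.1 h4).resolve_left hX)
  have h6 : ∀ n, coeff n (P * H) = hyp a b c n := by
    intro n
    induction n with
    | zero =>
      simp [hP, hH, binc, hyp, poch]
    | succ n ih =>
      have e1 := h5 n
      rw [ih, ← hyp_succ a b c hc] at e1
      have : ((n : ℝ) + 1) * (c + n) ≠ 0 := by positivity
      exact mul_left_cancel₀ this e1
  rw [← h6, coeff_mul]
  simp [hP, hH]

lemma poch_asymp (s : ℝ) :
    Tendsto (fun n : ℕ => poch s n / ((n : ℝ) ^ (s - 1) * n.factorial)) atTop (𝓝 (Real.Gamma s)⁻¹) := by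
  by_cases h0 : Real.Gamma s = 0
  · rw [h0, inv_zero]
    obtain ⟨m, hm⟩ := (Real.Gamma_eq_zero_iff s).1 h0
    refine Tendsto.congr' ?_ tendsto_const_nhds
    filter_upwards [eventually_gt_atTop m] with n hn
    have : poch s n = 0 := by
      unfold poch
      exact Finset.prod_eq_zero (Finset.mem_range.2 hn) (by rw [hm]; ring)
    rw [this, zero_div]
  · have h1 := (Real.GammaSeq_tendsto_Gamma s).inv₀ h0
    have h2 : Tendsto (fun n : ℕ => (n : ℝ) / (n + s)) atTop (𝓝 1) :=
      tendsto_natCast_div_add_atTop s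
    have h3 := h1.mul h2
    rw [mul_one] at h3
    refine h3.congr' ?_
    have h4 : ∀ᶠ n : ℕ in atTop, -s < (n : ℝ) := tendsto_natCast_atTop_atTop.eventually_gt_atTop (-s)
    filter_upwards [eventually_gt_atTop 0, h4] with n hn hn'
    have hnp : (0 : ℝ) < n := by exact_mod_cast hn
    have : (n : ℝ) + s ≠ 0 := by linarith
    have hf : (0 : ℝ) < n.factorial := by positivity
    have hr : (0 : ℝ) < (n : ℝ) ^ s := by positivity
    change (Real.GammaSeq s n)⁻¹ * _ = _
    rw [Real.GammaSeq]
    change ((n : ℝ) ^ s * n.factorial / poch s (n + 1))⁻¹ * _ = _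
    rw [poch_succ', Real.rpow_sub_one hnp.ne', add_comm s]
    field_simp

lemma term_bigO (a1 a2 a3 b1 b2 : ℝ) (h1 : 0 < b1) (h2 : 0 < b2) :
    (fun n : ℕ => poch a1 n * poch a2 n * poch a3 n / ((n.factorial : ℝ) * poch b1 n * poch b2 n))
      =O[atTop] fun n : ℕ => (n : ℝ) ^ (a1 + a2 + a3 - b1 - b2 - 1) := by
  have T := (((poch_asymp a1).mul (poch_asymp a2)).mul (poch_asymp a3)).div
    ((poch_asymp b1).mul (poch_asymp b2))
    (by have := Real.Gamma_pos_of_pos h1; have := Real.Gamma_pos_of_pos h2; positivity)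
  have O := (T.isBigO_one ℝ).mul
    (Asymptotics.isBigO_refl (fun n : ℕ => (n : ℝ) ^ (a1 + a2 + a3 - b1 - b2 - 1)) atTop)
  simp only [one_mul, Pi.div_apply] at O
  refine O.congr' ?_ (EventuallyEq.refl _ _)
  filter_upwards [eventually_gt_atTop 0] with n hn
  have hnp : (0 : ℝ) < n := by exact_mod_cast hn
  have hf : (0 : ℝ) < n.factorial := by positivity
  have p1 := poch_pos' h1 n
  have p2 := poch_pos' h2 n
  have e : (n : ℝ) ^ (a1 + a2 + a3 - b1 - b2 - 1) =
      (n : ℝ) ^ (a1 - 1) * (n : ℝ) ^ (a2 - 1) * (n : ℝ) ^ (a3 - 1) /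
       ((n : ℝ) ^ (b1 - 1) * (n : ℝ) ^ (b2 - 1)) := by
    rw [← Real.rpow_add hnp, ← Real.rpow_add hnp, ← Real.rpow_add hnp, ← Real.rpow_sub hnp]
    congr 1; ring
  rw [e]
  have r1 : (0 : ℝ) < (n : ℝ) ^ (a1 - 1) := by positivity
  have r2 : (0 : ℝ) < (n : ℝ) ^ (a2 - 1) := by positivity
  have r3 : (0 : ℝ) < (n : ℝ) ^ (a3 - 1) := by positivity
  have r4 : (0 : ℝ) < (n : ℝ) ^ (b1 - 1) := by positivity
  have r5 : (0 : ℝ) < (n : ℝ) ^ (b2 - 1) := by positivity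
  field_simp

lemma term_summable (a1 a2 a3 b1 b2 : ℝ) (h1 : 0 < b1) (h2 : 0 < b2)
    (hs : a1 + a2 + a3 < b1 + b2) :
    Summable (fun n : ℕ =>
      poch a1 n * poch a2 n * poch a3 n / ((n.factorial : ℝ) * poch b1 n * poch b2 n)) :=
  summable_of_isBigO_nat (Real.summable_nat_rpow.2 (by linarith)) (term_bigO a1 a2 a3 b1 b2 h1 h2)

lemma geom_summable (a1 a2 a3 b1 b2 : ℝ) (h1 : 0 < b1) (h2 : 0 < b2) {x : ℝ} (hx : |x| < 1) :
    Summable (fun n : ℕ =>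
      ‖poch a1 n * poch a2 n * poch a3 n / ((n.factorial : ℝ) * poch b1 n * poch b2 n) * x ^ n‖) := by
  obtain ⟨k, hk⟩ := exists_nat_ge (a1 + a2 + a3 - b1 - b2 - 1)
  refine summable_norm_mul_geometric_of_norm_lt_one' (k := k) (by simpa using hx)
    ((term_bigO a1 a2 a3 b1 b2 h1 h2).trans ?_)
  refine Asymptotics.IsBigO.of_bound 1 ?_
  filter_upwards [eventually_gt_atTop 0] with n hn
  have hnp : (1 : ℝ) ≤ n := by exact_mod_cast hn
  rw [one_mul, Real.norm_of_nonneg (by positivity), Real.norm_of_nonneg (by positivity)]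
  push_cast
  rw [← Real.rpow_natCast]
  exact Real.rpow_le_rpow_of_exponent_le hnp hk

lemma hyp_summable (a b c : ℝ) (hc : 0 < c) {x : ℝ} (hx : |x| < 1) :
    Summable (fun n : ℕ => ‖hyp a b c n * x ^ n‖) := by
  refine (geom_summable a b 1 c 1 hc one_pos hx).congr fun n => ?_
  have := poch_pos' one_pos n
  have := poch_pos' hc n
  have hf : (0 : ℝ) < n.factorial := by positivity
  unfold hyp
  congr 2
  field_simp

lemma binc_summable (s : ℝ) {x : ℝ} (hx : |x| < 1) :
    Summable (fun n : ℕ => ‖binc s n * x ^ n‖) := by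
  refine (hyp_summable s 1 1 one_pos hx).congr fun n => ?_
  have := poch_pos' one_pos n
  have hf : (0 : ℝ) < n.factorial := by positivity
  unfold hyp binc
  congr 2
  field_simp

lemma binc_eq_choose (s : ℝ) (n : ℕ) : Ring.choose (s + n - 1) n = binc s n := by
  rw [← Ring.multichoose_eq]
  have h := Ring.factorial_nsmul_multichoose_eq_ascPochhammer s n
  have h2 : (ascPochhammer ℕ n).smeval s = poch s n := by
    induction n with
    | zero => simp [poch]
    | succ n ih =>
      rw [poch_succ', ← ih (Ring.factorial_nsmul_multichoose_eq_ascPochhammer s n),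
        ascPochhammer_succ_right, Polynomial.smeval_mul, Polynomial.smeval_add,
        Polynomial.smeval_X, Polynomial.smeval_natCast]
      simp
  rw [h2, nsmul_eq_mul] at h
  have hf : (0 : ℝ) < n.factorial := by positivity
  unfold binc
  rw [← h]
  field_simp

lemma binc_tsum (s : ℝ) {x : ℝ} (hx : |x| < 1) :
    ∑' n, binc s n * x ^ n = (1 - x) ^ (-s) := by
  have h := (Real.one_div_one_sub_rpow_hasFPowerSeriesOnBall_zero s).hasSum (y := x)
    (by simpa [enorm_eq_nnnorm, ← NNReal.coe_lt_coe] using hx)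
  have h' := h.tsum_eq
  have : 0 < 1 - x := by linarith [(abs_lt.1 hx).2]
  rw [Real.rpow_neg this.le]
  simpa [FormalMultilinearSeries.ofScalars_apply_eq, binc_eq_choose, mul_comm] using h'

lemma euler_F21 (a b c : ℝ) (hc : 0 < c) {x : ℝ} (hx : |x| < 1) :
    F21 a b c x = (1 - x) ^ (c - a - b) * F21 (c - a) (c - b) c x := by
  have h := tsum_mul_tsum_eq_tsum_sum_antidiagonal_of_summable_norm
    (binc_summable (a + b - c) hx) (hyp_summable (c - a) (c - b) c hc hx)
  rw [binc_tsum _ hx] at h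
  have e : c - a - b = -(a + b - c) := by ring
  rw [e]
  change ∑' n, hyp a b c n * x ^ n = _ * ∑' n, hyp (c - a) (c - b) c n * x ^ n
  rw [h]
  refine tsum_congr fun n => ?_
  rw [← euler_coeff a b c hc n, Finset.sum_mul]
  refine Finset.sum_congr rfl fun p hp => ?_
  rw [← Finset.HasAntidiagonal.mem_antidiagonal.1 hp, pow_add]
  ring

lemma beta_int (u v : ℝ) (hu : 0 < u) (hv : 0 < v) :
    IntegrableOn (fun x : ℝ => x ^ (u - 1) * (1 - x) ^ (v - 1)) (Ioo 0 1) ∧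
    ∫ x in Ioo (0 : ℝ) 1, x ^ (u - 1) * (1 - x) ^ (v - 1) =
      Real.Gamma u * Real.Gamma v / Real.Gamma (u + v) := by
  have hc := Complex.betaIntegral_convergent (u := u) (v := v) (by simpa) (by simpa)
  rw [intervalIntegrable_iff_integrableOn_Ioc_of_le (by simp), integrableOn_Ioc_iff_integrableOn_Ioo]
    at hc
  have key : ∀ x ∈ Ioo (0 : ℝ) 1, ((x : ℂ) ^ ((u : ℂ) - 1) * (1 - (x : ℂ)) ^ ((v : ℂ) - 1)).re =
      x ^ (u - 1) * (1 - x) ^ (v - 1) := by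
    intro x hx
    have h1 : 0 ≤ x := hx.1.le
    have h2 : 0 ≤ 1 - x := by linarith [hx.2]
    have : (x : ℂ) ^ ((u : ℂ) - 1) * (1 - (x : ℂ)) ^ ((v : ℂ) - 1) =
      ((x ^ (u - 1) * (1 - x) ^ (v - 1) : ℝ) : ℂ) := by
      push_cast [Complex.ofReal_cpow h1, Complex.ofReal_cpow h2]
      rfl
    rw [this, Complex.ofReal_re]
  have hi := hc.re
  refine ⟨?_, ?_⟩
  · exact (integrableOn_congr_fun (fun x hx => key x hx) measurableSet_Ioo).1 hi
  · have h1 := beta_eq_betaIntegralReal u v hu hv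
    rw [beta, Complex.betaIntegral, intervalIntegral.integral_of_le (by norm_num),
      integral_Ioc_eq_integral_Ioo, ← RCLike.re_to_complex, ← integral_re hc] at h1
    rw [h1]
    exact setIntegral_congr_fun measurableSet_Ioo fun x hx => (key x hx).symm

lemma Gamma_add_nat (s : ℝ) (hs : 0 < s) (n : ℕ) :
    Real.Gamma (s + n) = poch s n * Real.Gamma s := by
  induction n with
  | zero => simp [poch]
  | succ n ih =>
    rw [poch_succ', Nat.cast_succ, ← add_assoc, Real.Gamma_add_one (by positivity), ih]
    ring

lemma euler_int (B C d b f : ℝ) (hd : 0 < d) (hb : 0 < b) (hf : 0 < f)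
    (hs : B + C < d + f) :
    ∫ x in Ioo (0 : ℝ) 1, x ^ (b - 1) * (1 - x) ^ (f - 1) * F21 B C d x =
      Real.Gamma b * Real.Gamma f / Real.Gamma (b + f) * F32one B C b (b + f) d := by
  set F : ℕ → ℝ → ℝ := fun n x => hyp B C d n * (x ^ (b + n - 1) * (1 - x) ^ (f - 1)) with hF
  have hint : ∀ n, IntegrableOn (F n) (Ioo 0 1) := fun n =>
    (beta_int (b + n) f (by positivity) hf).1.const_mul _
  have hval : ∀ (c : ℝ) (n : ℕ), c * (Real.Gamma (b + n) * Real.Gamma f / Real.Gamma (b + n + f)) =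
      Real.Gamma b * Real.Gamma f / Real.Gamma (b + f) * (c * poch b n / poch (b + f) n) := by
    intro c n
    have e : b + n + f = b + f + n := by ring
    have p := poch_pos' (add_pos hb hf) n
    have g := Real.Gamma_pos_of_pos (add_pos hb hf)
    rw [e, Gamma_add_nat b hb, Gamma_add_nat (b + f) (by positivity)]
    field_simp
  have hn : ∀ n, ∫ x in Ioo (0 : ℝ) 1, ‖F n x‖ = Real.Gamma b * Real.Gamma f / Real.Gamma (b + f) *
      (|hyp B C d n| * poch b n / poch (b + f) n) := by
    intro n
    rw [← hval, ← (beta_int (b + n) f (by positivity) hf).2, ← integral_const_mul]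
    refine setIntegral_congr_fun measurableSet_Ioo fun x hx => ?_
    have h1 : 0 < x := hx.1
    have h2 : 0 < 1 - x := by linarith [hx.2]
    simp only [hF]
    rw [norm_mul, Real.norm_eq_abs, Real.norm_of_nonneg (by positivity)]
  have ht : ∀ n, hyp B C d n * poch b n / poch (b + f) n =
      poch B n * poch C n * poch b n / ((n.factorial : ℝ) * poch (b + f) n * poch d n) := by
    intro n
    have := poch_pos' hd n
    have := poch_pos' (add_pos hb hf) n
    have hf : (0 : ℝ) < n.factorial := by positivity
    unfold hyp
    field_simp
  have hsum : Summable fun n => ∫ x in Ioo (0 : ℝ) 1, ‖F n x‖ := by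
    simp only [hn]
    refine Summable.mul_left _ ?_
    refine (term_summable B C b (b + f) d (by positivity) hd (by linarith)).abs.congr fun n => ?_
    rw [← ht, abs_div, abs_mul, abs_of_pos (poch_pos' hb n), abs_of_pos (poch_pos' (add_pos hb hf) n)]
  have h := integral_tsum_of_summable_integral_norm hint hsum
  have hl : ∀ n, ∫ x in Ioo (0 : ℝ) 1, F n x = Real.Gamma b * Real.Gamma f / Real.Gamma (b + f) *
      (poch B n * poch C n * poch b n / ((n.factorial : ℝ) * poch (b + f) n * poch d n)) := by
    intro n
    rw [← ht, ← hval, ← (beta_int (b + n) f (by positivity) hf).2, ← integral_const_mul]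
  simp only [hl] at h
  rw [tsum_mul_left] at h
  unfold F32one
  rw [h]
  refine setIntegral_congr_fun measurableSet_Ioo fun x hx => ?_
  have h1 : 0 < x := hx.1
  simp only [hF]
  unfold F21
  rw [← tsum_mul_left]
  refine tsum_congr fun n => ?_
  have e : b + n - 1 = b - 1 + n := by ring
  rw [e, Real.rpow_add h1, Real.rpow_natCast]
  unfold hyp
  ring

theorem F32_transformation (a a' b t : ℝ) (ha : 0 < a) (ha' : 0 < a') (hb : 0 < b)
    (hta : 0 < t + a) (htb : 0 < t + b) :
    F32one (a + t) a b (t + a + b) (a + a') / (Real.Gamma a' * Real.Gamma (a + b + t)) =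
      F32one a' (a' - t) b (a' + b) (a + a') /
        (Real.Gamma (a + t) * Real.Gamma (a' + b)) := by
  have hd : 0 < a + a' := by positivity
  have i1 := euler_int (a + t) a (a + a') b (a + t) hd hb (by linarith) (by linarith)
  have i2 := euler_int (a' - t) a' (a + a') b a' hd hb ha' (by linarith)
  have e : ∫ x in Ioo (0 : ℝ) 1, x ^ (b - 1) * (1 - x) ^ (a + t - 1) * F21 (a + t) a (a + a') x =
      ∫ x in Ioo (0 : ℝ) 1, x ^ (b - 1) * (1 - x) ^ (a' - 1) * F21 (a' - t) a' (a + a') x := by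
    refine setIntegral_congr_fun measurableSet_Ioo fun x hx => ?_
    have h2 : 0 < 1 - x := by linarith [hx.2]
    have hx' : |x| < 1 := abs_lt.2 ⟨by linarith [hx.1], hx.2⟩
    rw [euler_F21 (a + t) a (a + a') hd hx', show a + a' - (a + t) = a' - t by ring,
      show a + a' - a = a' by ring, show a' - 1 = (a + t - 1) + (a' - t - a) by ring,
      Real.rpow_add h2]
    ring
  rw [i1, i2] at e
  have s1 : F32one (a' - t) a' b (b + a') (a + a') = F32one a' (a' - t) b (a' + b) (a + a') := by
    unfold F32one
    refine tsum_congr fun n => ?_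
    rw [add_comm b a', mul_comm (poch (a' - t) n)]
  rw [s1, show b + (a + t) = t + a + b by ring, show b + a' = a' + b by ring] at e
  rw [show a + b + t = t + a + b by ring]
  have g1 := Real.Gamma_pos_of_pos hb
  have g2 := Real.Gamma_pos_of_pos ha'
  have g3 : 0 < Real.Gamma (a + t) := Real.Gamma_pos_of_pos (by linarith)
  have g4 : 0 < Real.Gamma (t + a + b) := Real.Gamma_pos_of_pos (by linarith)
  have g5 : 0 < Real.Gamma (a' + b) := Real.Gamma_pos_of_pos (by linarith)
  field_simp at e ⊢
  linear_combination e
end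

section
/- The real beta-hypergeometric family is identifiable: if a, a', b, a₁, a₁', b₁ > 0 and μ_{a,a',b} = μ_{a₁,a₁',b₁} as probability measures on (0,1), then (a, a', b) = (a₁, a₁', b₁). -/
open MeasureTheory ProbabilityTheory Real Set Filter Topology

lemma poch_eq (a : ℝ) (n : ℕ) : poch a n = (ascPochhammer ℝ n).eval a := by
  induction n with
  | zero => simp [poch]
  | succ n ih => rw [ascPochhammer_succ_eval, ← ih]; simp [poch, Finset.prod_range_succ]

lemma poch_pos {a : ℝ} (ha : 0 < a) (n : ℕ) : 0 < poch a n :=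
  Finset.prod_pos fun i _ => by positivity

lemma F21_eq (a b c : ℝ) : F21 a b c = ordinaryHypergeometric a b c := by
  funext x
  rw [ordinaryHypergeometric_eq_tsum]
  simp only [F21, poch_eq, smul_eq_mul]
  congr 1; funext n
  rw [div_eq_mul_inv, mul_inv]; ring

lemma F21_series {a b c : ℝ} (ha : 0 < a) (hb : 0 < b) (hc : 0 < c) :
    HasFPowerSeriesOnBall (F21 a b c) (ordinaryHypergeometricSeries ℝ a b c) 0 1 := by
  have hr : (ordinaryHypergeometricSeries ℝ a b c).radius = 1 := by
    apply ordinaryHypergeometricSeries_radius_eq_one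
    intro k
    have : (0:ℝ) ≤ k := Nat.cast_nonneg k
    exact ⟨by linarith, by linarith, by linarith⟩
  have := (ordinaryHypergeometricSeries ℝ a b c).hasFPowerSeriesOnBall (by rw [hr]; exact one_pos)
  rw [hr] at this
  rw [F21_eq]
  exact this

lemma F21_cont {a b c : ℝ} (ha : 0 < a) (hb : 0 < b) (hc : 0 < c) :
    ContinuousOn (F21 a b c) (Ico 0 1) := by
  refine (F21_series ha hb hc).continuousOn.mono ?_
  intro x hx
  simp only [Metric.mem_eball, edist_zero_right]
  rw [← ofReal_norm, Real.norm_of_nonneg hx.1]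
  exact ENNReal.ofReal_lt_one.2 hx.2

lemma F21_zero (a b c : ℝ) : F21 a b c 0 = 1 := by rw [F21_eq]; simp

lemma F21_nonneg {a b c x : ℝ} (ha : 0 < a) (hb : 0 < b) (hc : 0 < c) (hx : 0 ≤ x) :
    0 ≤ F21 a b c x := tsum_nonneg fun n => by
  have := poch_pos ha n; have := poch_pos hb n; have := poch_pos hc n
  positivity

lemma poch_succ_gamma {s : ℝ} (hs : 0 < s) {n : ℕ} (hn : 0 < n) :
    0 < Real.GammaSeq s n ∧
    poch s (n+1) = (n:ℝ)^s * (n.factorial : ℝ) / Real.GammaSeq s n := by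
  have h := poch_pos hs (n+1)
  have hn' : (0:ℝ) < n := by exact_mod_cast hn
  have e : Real.GammaSeq s n = (n:ℝ)^s * (n.factorial : ℝ) / poch s (n+1) := rfl
  have : 0 < Real.GammaSeq s n := by rw [e]; positivity
  refine ⟨this, ?_⟩
  rw [eq_div_iff this.ne', e]; field_simp

lemma F32_summable {a a' b : ℝ} (ha : 0 < a) (ha' : 0 < a') (hb : 0 < b) :
    Summable fun n : ℕ => poch a n * poch a n * poch b n /
    ((n.factorial : ℝ) * poch (a+b) n * poch (a+a') n) := by
  rw [← summable_nat_add_iff 1]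
  have hS : Summable fun n : ℕ => (n:ℝ) ^ (-(1 + a')) :=
    Real.summable_nat_rpow.2 (by linarith)
  refine summable_of_isBigO_nat hS ?_
  have hT : Tendsto (fun n => Real.GammaSeq (a+b) n * Real.GammaSeq (a+a') n /
      (Real.GammaSeq a n * Real.GammaSeq a n * Real.GammaSeq b n)) atTop
      (𝓝 (Real.Gamma (a+b) * Real.Gamma (a+a') / (Real.Gamma a * Real.Gamma a * Real.Gamma b))) := by
    have h1 := Real.Gamma_pos_of_pos ha
    have h2 := Real.Gamma_pos_of_pos hb
    refine Tendsto.div ((Real.GammaSeq_tendsto_Gamma _).mul (Real.GammaSeq_tendsto_Gamma _))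
      (((Real.GammaSeq_tendsto_Gamma _).mul (Real.GammaSeq_tendsto_Gamma _)).mul
        (Real.GammaSeq_tendsto_Gamma _)) (by positivity)
  have hB := (hT.isBigO_one ℝ).mul (Asymptotics.isBigO_refl (fun n : ℕ => (n:ℝ) ^ (-(1 + a'))) atTop)
  simp only [one_mul] at hB
  refine Asymptotics.IsBigO.trans ?_ hB
  refine Asymptotics.IsBigO.of_bound 1 ?_
  filter_upwards [eventually_gt_atTop 0] with n hn
  have hn' : (0:ℝ) < n := by exact_mod_cast hn
  obtain ⟨p1, e1⟩ := poch_succ_gamma ha hn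
  obtain ⟨p2, e2⟩ := poch_succ_gamma hb hn
  obtain ⟨p3, e3⟩ := poch_succ_gamma (add_pos ha hb) hn
  obtain ⟨p4, e4⟩ := poch_succ_gamma (add_pos ha ha') hn
  rw [e1, e2, e3, e4, Nat.factorial_succ]
  push_cast
  rw [Real.norm_of_nonneg (by positivity), Real.norm_of_nonneg (by positivity), one_mul]
  rw [Real.rpow_neg hn'.le, Real.rpow_add hn', Real.rpow_add hn', Real.rpow_add hn', Real.rpow_one]
  have q1 := Real.rpow_pos_of_pos hn' a
  have q2 := Real.rpow_pos_of_pos hn' b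
  have q3 := Real.rpow_pos_of_pos hn' a'
  have q4 : (0:ℝ) < n.factorial := by positivity
  generalize (n:ℝ)^a = A at *
  generalize (n:ℝ)^b = B at *
  generalize (n:ℝ)^a' = A' at *
  generalize (n.factorial:ℝ) = f at *
  generalize Real.GammaSeq a n = g1 at *
  generalize Real.GammaSeq b n = g2 at *
  generalize Real.GammaSeq (a+b) n = g3 at *
  generalize Real.GammaSeq (a+a') n = g4 at *
  generalize (n:ℝ) = m at *
  have : A * f / g1 * (A * f / g1) * (B * f / g2) /
    ((m + 1) * f * (A * B * f / g3) * (A * A' * f / g4)) = g3 * g4 / (g1 * g1 * g2) * ((m+1) * A')⁻¹ := by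
    field_simp
  rw [this]
  gcongr
  linarith

lemma Cbh_pos {a a' b : ℝ} (ha : 0 < a) (ha' : 0 < a') (hb : 0 < b) : 0 < Cbh a a' b := by
  have h : 0 < F32one a a b (a+b) (a+a') := by
    refine (F32_summable ha ha' hb).tsum_pos (fun n => ?_) 0 ?_
    · have := poch_pos ha n; have := poch_pos hb n
      have := poch_pos (add_pos ha hb) n; have := poch_pos (add_pos ha ha') n
      positivity
    · simp [poch]
  have h1 := Real.Gamma_pos_of_pos ha
  have h2 := Real.Gamma_pos_of_pos hb
  have h3 := Real.Gamma_pos_of_pos (add_pos ha hb)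
  unfold Cbh; positivity

lemma bhDens_cont {a a' b : ℝ} (ha : 0 < a) (ha' : 0 < a') (hb : 0 < b) :
    ContinuousOn (fun x => Cbh a a' b * x ^ (a - 1) * (1 - x) ^ (b - 1) * F21 a b (a + a') x)
      (Ioo 0 1) := by
  refine ContinuousOn.mul (ContinuousOn.mul (continuousOn_const.mul ?_) ?_) ?_
  · exact continuousOn_id.rpow_const fun x hx => Or.inl hx.1.ne'
  · exact ContinuousOn.rpow_const (by fun_prop) fun x hx => Or.inl (by linarith [hx.2])
  · exact (F21_cont ha hb (by positivity)).mono Ioo_subset_Ico_self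

lemma bhDens_meas {a a' b : ℝ} (ha : 0 < a) (ha' : 0 < a') (hb : 0 < b) :
    AEMeasurable (fun x => ENNReal.ofReal (bhDens a a' b x)) volume := by
  have e : bhDens a a' b = (Ioo (0:ℝ) 1).indicator
      (fun x => Cbh a a' b * x ^ (a - 1) * (1 - x) ^ (b - 1) * F21 a b (a + a') x) := by
    funext x; simp [bhDens, indicator]
  rw [e]
  refine AEMeasurable.ennreal_ofReal ?_
  rw [aemeasurable_indicator_iff measurableSet_Ioo]
  exact (bhDens_cont ha ha' hb).aemeasurable measurableSet_Ioo

lemma dens_eq {a a' b a1 a1' b1 : ℝ}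
    (ha : 0 < a) (ha' : 0 < a') (hb : 0 < b)
    (ha1 : 0 < a1) (ha1' : 0 < a1') (hb1 : 0 < b1)
    (h : bhMeasure a a' b = bhMeasure a1 a1' b1) :
    EqOn (fun x => Cbh a a' b * x ^ (a - 1) * (1 - x) ^ (b - 1) * F21 a b (a + a') x)
      (fun x => Cbh a1 a1' b1 * x ^ (a1 - 1) * (1 - x) ^ (b1 - 1) * F21 a1 b1 (a1 + a1') x)
      (Ioo 0 1) := by
  have h2 := (withDensity_eq_iff_of_sigmaFinite (bhDens_meas ha ha' hb)
    (bhDens_meas ha1 ha1' hb1)).1 h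
  refine Measure.eqOn_open_of_ae_eq (μ := volume) ?_ isOpen_Ioo (bhDens_cont ha ha' hb)
    (bhDens_cont ha1 ha1' hb1)
  filter_upwards [ae_restrict_of_ae h2, ae_restrict_mem measurableSet_Ioo] with x hx hm
  have hm' : 0 < x ∧ x < 1 := hm
  simp only [bhDens, if_pos hm'] at hx
  have p1 : 0 < 1 - x := by linarith [hm'.2]
  have := Cbh_pos ha ha' hb
  have := Cbh_pos ha1 ha1' hb1
  have := F21_nonneg ha hb (add_pos ha ha') hm'.1.le
  have := F21_nonneg ha1 hb1 (add_pos ha1 ha1') hm'.1.le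
  have := hm'.1
  exact (ENNReal.ofReal_eq_ofReal_iff (by positivity) (by positivity)).1 hx

lemma G_tendsto {a a' b : ℝ} (ha : 0 < a) (ha' : 0 < a') (hb : 0 < b) :
    Tendsto (fun x => Cbh a a' b * (1 - x) ^ (b - 1) * F21 a b (a + a') x) (𝓝[>] 0)
      (𝓝 (Cbh a a' b)) := by
  have h1 : Tendsto (F21 a b (a+a')) (𝓝[>] 0) (𝓝 1) := by
    have := (F21_series ha hb (add_pos ha ha')).hasFPowerSeriesAt.continuousAt.tendsto
    rw [F21_zero] at this
    exact this.mono_left nhdsWithin_le_nhds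
  have h2 : Tendsto (fun x:ℝ => (1 - x) ^ (b - 1)) (𝓝[>] 0) (𝓝 1) := by
    have : ContinuousAt (fun x:ℝ => (1 - x) ^ (b - 1)) 0 :=
      ContinuousAt.rpow_const (by fun_prop) (by simp)
    have := this.tendsto
    simp only [sub_zero, Real.one_rpow] at this
    exact this.mono_left nhdsWithin_le_nhds
  simpa using (h2.const_mul (Cbh a a' b)).mul h1

lemma not_lt_a {a a' b a1 a1' b1 : ℝ}
    (ha : 0 < a) (ha' : 0 < a') (hb : 0 < b)
    (ha1 : 0 < a1) (ha1' : 0 < a1') (hb1 : 0 < b1)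
    (h : bhMeasure a a' b = bhMeasure a1 a1' b1) : ¬ a1 < a := by
  intro hlt
  have he := dens_eq ha ha' hb ha1 ha1' hb1 h
  have hx : Tendsto (fun x:ℝ => x ^ (a - a1)) (𝓝[>] 0) (𝓝 0) := by
    have : ContinuousAt (fun x:ℝ => x ^ (a - a1)) 0 :=
      continuousAt_id.rpow_const (Or.inr (by simp; linarith))
    have := this.tendsto
    rw [Real.zero_rpow (by linarith)] at this
    exact this.mono_left nhdsWithin_le_nhds
  have h1 := hx.mul (G_tendsto ha ha' hb)
  have h2 := G_tendsto ha1 ha1' hb1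
  rw [zero_mul] at h1
  refine (Cbh_pos ha1 ha1' hb1).ne' (tendsto_nhds_unique (h2.congr' ?_) h1)
  filter_upwards [Ioo_mem_nhdsGT (zero_lt_one' ℝ)] with x hx
  have := he hx
  simp only at this
  have hp := Real.rpow_pos_of_pos hx.1 (a1 - 1)
  have e : x ^ (a - 1) = x ^ (a - a1) * x ^ (a1 - 1) := by
    rw [← Real.rpow_add hx.1]; congr 1; ring
  rw [e] at this
  apply mul_left_cancel₀ hp.ne'
  linarith

lemma key_eq {a a' b a1' b1 : ℝ}
    (ha : 0 < a) (ha' : 0 < a') (hb : 0 < b) (ha1' : 0 < a1') (hb1 : 0 < b1)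
    (h : bhMeasure a a' b = bhMeasure a a1' b1) :
    ∀ᶠ x in 𝓝[>] (0:ℝ), (1 - x) ^ b * F21 a b (a + a') x = (1 - x) ^ b1 * F21 a b1 (a + a1') x := by
  have he := dens_eq ha ha' hb ha ha1' hb1 h
  have h0 : ∀ x ∈ Ioo (0:ℝ) 1, Cbh a a' b * (1 - x) ^ (b - 1) * F21 a b (a + a') x
      = Cbh a a1' b1 * (1 - x) ^ (b1 - 1) * F21 a b1 (a + a1') x := by
    intro x hx
    have := he hx
    simp only at this
    have hp := Real.rpow_pos_of_pos hx.1 (a - 1)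
    apply mul_left_cancel₀ hp.ne'
    linarith
  have hC : Cbh a a1' b1 = Cbh a a' b := by
    refine tendsto_nhds_unique ((G_tendsto ha ha1' hb1).congr' ?_) (G_tendsto ha ha' hb)
    filter_upwards [Ioo_mem_nhdsGT (zero_lt_one' ℝ)] with x hx
    exact (h0 x hx).symm
  filter_upwards [Ioo_mem_nhdsGT (zero_lt_one' ℝ)] with x hx
  have := h0 x hx
  rw [hC] at this
  have hp : 0 < 1 - x := by linarith [hx.2]
  rw [Real.rpow_sub_one hp.ne', Real.rpow_sub_one hp.ne'] at this
  apply mul_left_cancel₀ (Cbh_pos ha ha' hb).ne'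
  field_simp at this
  linear_combination this

open Asymptotics in
lemma expand_of_series {f : ℝ → ℝ} {p : FormalMultilinearSeries ℝ ℝ ℝ}
    (h : HasFPowerSeriesAt f p 0) {c0 c1 c2 c3 : ℝ}
    (h0 : p.coeff 0 = c0) (h1 : p.coeff 1 = c1) (h2 : p.coeff 2 = c2) (h3 : p.coeff 3 = c3) :
    (fun x => f x - (c0 + c1 * x + c2 * x^2 + c3 * x^3)) =O[𝓝 0] (fun x : ℝ => x^4) := by
  have := h.isBigO_sub_partialSum_pow 4
  simp only [zero_add, FormalMultilinearSeries.partialSum, Finset.sum_range_succ,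
    Finset.sum_range_zero, FormalMultilinearSeries.apply_eq_pow_smul_coeff, h0, h1, h2, h3,
    smul_eq_mul] at this
  refine (this.congr_left fun x => by ring).trans ?_
  exact isBigO_of_le _ fun x => by simp

open Asymptotics in
lemma expand_F21 {a b c : ℝ} (ha : 0 < a) (hb : 0 < b) (hc : 0 < c) :
    (fun x => F21 a b c x - (1 + a*b/c * x + a*(a+1)*(b*(b+1))/(2*(c*(c+1))) * x^2
      + a*(a+1)*(a+2)*(b*(b+1)*(b+2))/(6*(c*(c+1)*(c+2))) * x^3)) =O[𝓝 0] (fun x : ℝ => x^4) := by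
  have hh := (F21_series ha hb hc).hasFPowerSeriesAt
  have hn : ∀ n, (ordinaryHypergeometricSeries ℝ a b c).coeff n
      = (n.factorial : ℝ)⁻¹ * poch a n * poch b n * (poch c n)⁻¹ := by
    intro n
    rw [ordinaryHypergeometricSeries, FormalMultilinearSeries.coeff_ofScalars, poch_eq, poch_eq,
      poch_eq]
  apply expand_of_series hh <;> rw [hn] <;>
  simp [poch, Finset.prod_range_succ, Nat.factorial] <;> field_simp

open Asymptotics in
lemma expand_pow (b : ℝ) :
    (fun x => (1 - x) ^ b - (1 + (-b) * x + b*(b-1)/2 * x^2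
      + (-(b*(b-1)*(b-2)/6)) * x^3)) =O[𝓝 0] (fun x : ℝ => x^4) := by
  have hh := (Real.one_add_rpow_hasFPowerSeriesOnBall_zero (a := b)).hasFPowerSeriesAt
  have hc : ∀ n, (binomialSeries ℝ b).coeff n = Ring.choose b n := by
    intro n; simp [binomialSeries, FormalMultilinearSeries.coeff_ofScalars]
  have key := expand_of_series hh (c0 := 1) (c1 := b) (c2 := b*(b-1)/2) (c3 := b*(b-1)*(b-2)/6)
    ?_ ?_ ?_ ?_
  · have ht : Tendsto (fun x : ℝ => -x) (𝓝 0) (𝓝 0) := by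
      simpa using (continuous_neg (G := ℝ)).tendsto 0
    have := key.comp_tendsto ht
    refine (this.congr_left fun x => ?_).trans (isBigO_of_le _ fun x => ?_)
    · simp only [Function.comp, ← sub_eq_add_neg]; ring
    · simp
  all_goals
    rw [hc, Ring.choose_eq_smul]
    have h2 : (2 : Polynomial ℤ).smeval b = 2 := by
      have := Polynomial.smeval_natCast ℤ b 2
      simpa using this
    simp [h2, descPochhammer_succ_right, Polynomial.smeval_mul, Polynomial.smeval_sub, Polynomial.smeval_X, Nat.factorial, Polynomial.smeval_one]
    try ring

open Asymptotics in
lemma expand_mul {f g : ℝ → ℝ} {c1 c2 c3 d1 d2 d3 : ℝ}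
    (hf : (fun x => f x - (1 + c1 * x + c2 * x^2 + c3 * x^3)) =O[𝓝 0] (fun x : ℝ => x^4))
    (hg : (fun x => g x - (1 + d1 * x + d2 * x^2 + d3 * x^3)) =O[𝓝 0] (fun x : ℝ => x^4)) :
    (fun x => f x * g x - (1 + (c1 + d1) * x + (c2 + c1 * d1 + d2) * x^2
      + (c3 + c2 * d1 + c1 * d2 + d3) * x^3)) =O[𝓝 0] (fun x : ℝ => x^4) := by
  have bdd : ∀ q : ℝ → ℝ, Continuous q → q =O[𝓝 0] (fun _ => (1:ℝ)) :=
    fun q hq => (hq.tendsto 0).isBigO_one ℝ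
  have hx4 : (fun x : ℝ => x^4) =O[𝓝 0] (fun _ => (1:ℝ)) := bdd _ (by fun_prop)
  have hg1 : g =O[𝓝 0] (fun _ => (1:ℝ)) := by
    have := (hg.trans hx4).add (bdd (fun x => 1 + d1 * x + d2 * x^2 + d3 * x^3) (by fun_prop))
    exact this.congr_left fun x => by ring
  have A := hf.mul hg1
  have B := (bdd (fun x => 1 + c1 * x + c2 * x^2 + c3 * x^3) (by fun_prop)).mul hg
  have D := (isBigO_refl (fun x : ℝ => x^4) (𝓝 0)).mul
    (bdd (fun x => (c1 * d3 + c2 * d2 + c3 * d1) + (c2 * d3 + c3 * d2) * x + c3 * d3 * x^2)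
      (by fun_prop))
  simp only [mul_one, one_mul] at A B D
  exact ((A.add B).add D).congr_left fun x => by ring

open Asymptotics in
lemma peel {c : ℝ} {q : ℝ → ℝ} (hq : Continuous q) {n : ℕ}
    (h : (fun x => c + x * q x) =O[𝓝[>] 0] (fun x : ℝ => x^(n+1))) :
    c = 0 ∧ q =O[𝓝[>] 0] (fun x : ℝ => x^n) := by
  have t0 : Tendsto (fun x : ℝ => x^(n+1)) (𝓝[>] 0) (𝓝 0) := by
    have := (continuous_pow (M := ℝ) (n+1)).tendsto 0
    simp only [ne_eq, Nat.add_eq_zero_iff, one_ne_zero, and_false, not_false_eq_true, zero_pow] at this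
    exact this.mono_left nhdsWithin_le_nhds
  have t1 := h.trans_tendsto t0
  have t2 : Tendsto (fun x => c + x * q x) (𝓝[>] 0) (𝓝 c) := by
    have : Continuous (fun x => c + x * q x) := by fun_prop
    have := this.tendsto 0
    simp only [zero_mul, add_zero] at this
    exact this.mono_left nhdsWithin_le_nhds
  have hc : c = 0 := tendsto_nhds_unique t2 t1
  refine ⟨hc, ?_⟩
  subst hc
  have := (isBigO_refl (fun x : ℝ => x⁻¹) (𝓝[>] 0)).mul h
  refine this.congr' ?_ ?_ <;>
  · filter_upwards [self_mem_nhdsWithin] with x hx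
    have : x ≠ 0 := ne_of_gt hx
    field_simp
    try ring

open Asymptotics in
lemma coeff_unique {f g : ℝ → ℝ} {c1 c2 c3 d1 d2 d3 : ℝ}
    (hf : (fun x => f x - (1 + c1 * x + c2 * x^2 + c3 * x^3)) =O[𝓝 0] (fun x : ℝ => x^4))
    (hg : (fun x => g x - (1 + d1 * x + d2 * x^2 + d3 * x^3)) =O[𝓝 0] (fun x : ℝ => x^4))
    (h : ∀ᶠ x in 𝓝[>] (0:ℝ), f x = g x) : c1 = d1 ∧ c2 = d2 ∧ c3 = d3 := by
  have h0 := (hg.mono nhdsWithin_le_nhds).sub (hf.mono (nhdsWithin_le_nhds (s := Ioi 0)))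
  have h1 : (fun x => (0:ℝ) + x * ((c1 - d1) + x * ((c2 - d2) + x * ((c3 - d3) + x * 0))))
      =O[𝓝[>] 0] (fun x : ℝ => x^4) := by
    refine h0.congr' ?_ EventuallyEq.rfl
    filter_upwards [h] with x hx
    rw [hx]; ring
  obtain ⟨-, h1⟩ := peel (by fun_prop) h1
  obtain ⟨e1, h1⟩ := peel (by fun_prop) h1
  obtain ⟨e2, h1⟩ := peel (by fun_prop) h1
  obtain ⟨e3, h1⟩ := peel (q := fun _ => 0) (by fun_prop) h1
  exact ⟨by linarith, by linarith, by linarith⟩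

lemma algebra_final {a u b v e : ℝ} (ha : 0 < a) (hu : 0 < u) (hb : 0 < b) (hv : 0 < v) (he : 0 < e)
    (h1 : u*b/(a+u) = v*e/(a+v))
    (h2 : (u+1)*(b+1)/(a+u+1) = (v+1)*(e+1)/(a+v+1))
    (h3 : (u+2)*(b+2)/(a+u+2) = (v+2)*(e+2)/(a+v+2)) : u = v ∧ b = e := by
  rw [div_eq_div_iff (by positivity) (by positivity)] at h1 h2 h3
  have hb' : b = e := by
    have q2 : (b - e) = 0 := by linarith
    linarith
  subst hb'
  refine ⟨?_, rfl⟩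
  have : (a * b) * (u - v) = 0 := by linarith
  rcases mul_eq_zero.1 this with h | h
  · exact absurd h (by positivity)
  · linarith

lemma coeffs_final {a u b v e : ℝ} (ha : 0 < a) (hu : 0 < u) (hb : 0 < b) (hv : 0 < v) (he : 0 < e)
    (h1 : -b + a*b/(a+u) = -e + a*e/(a+v))
    (h2 : b*(b-1)/2 + -b * (a*b/(a+u)) + a*(a+1)*(b*(b+1))/(2*((a+u)*(a+u+1)))
      = e*(e-1)/2 + -e * (a*e/(a+v)) + a*(a+1)*(e*(e+1))/(2*((a+v)*(a+v+1))))
    (h3 : -(b*(b-1)*(b-2)/6) + b*(b-1)/2 * (a*b/(a+u)) + -b * (a*(a+1)*(b*(b+1))/(2*((a+u)*(a+u+1))))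
      + a*(a+1)*(a+2)*(b*(b+1)*(b+2))/(6*((a+u)*(a+u+1)*(a+u+2)))
      = -(e*(e-1)*(e-2)/6) + e*(e-1)/2 * (a*e/(a+v)) + -e * (a*(a+1)*(e*(e+1))/(2*((a+v)*(a+v+1))))
      + a*(a+1)*(a+2)*(e*(e+1)*(e+2))/(6*((a+v)*(a+v+1)*(a+v+2)))) : u = v ∧ b = e := by
  have k1 : ∀ u b : ℝ, 0 < u → -b + a*b/(a+u) = -(u*b/(a+u)) := by
    intro u b hu; field_simp; ring
  have k2 : ∀ u b : ℝ, 0 < u → b*(b-1)/2 + -b * (a*b/(a+u)) + a*(a+1)*(b*(b+1))/(2*((a+u)*(a+u+1)))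
      = u*b/(a+u) * ((u+1)*(b+1)/(a+u+1)) / 2 - u*b/(a+u) := by
    intro u b hu; field_simp; ring
  have k3 : ∀ u b : ℝ, 0 < u → -(b*(b-1)*(b-2)/6) + b*(b-1)/2 * (a*b/(a+u))
      + -b * (a*(a+1)*(b*(b+1))/(2*((a+u)*(a+u+1))))
      + a*(a+1)*(a+2)*(b*(b+1)*(b+2))/(6*((a+u)*(a+u+1)*(a+u+2)))
      = - (u*b/(a+u)) + u*b/(a+u) * ((u+1)*(b+1)/(a+u+1))
        - u*b/(a+u) * ((u+1)*(b+1)/(a+u+1)) * ((u+2)*(b+2)/(a+u+2)) / 6 := by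
    intro u b hu; field_simp; ring
  rw [k1 u b hu, k1 v e hv] at h1
  rw [k2 u b hu, k2 v e hv] at h2
  rw [k3 u b hu, k3 v e hv] at h3
  have r1 : u*b/(a+u) = v*e/(a+v) := by linarith
  have p1 : 0 < v*e/(a+v) := by positivity
  have p2 : 0 < (v+1)*(e+1)/(a+v+1) := by positivity
  rw [r1] at h2 h3
  have r2 : (u+1)*(b+1)/(a+u+1) = (v+1)*(e+1)/(a+v+1) := by
    apply mul_left_cancel₀ p1.ne'; linarith
  rw [r2] at h3
  have r3 : (u+2)*(b+2)/(a+u+2) = (v+2)*(e+2)/(a+v+2) := by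
    apply mul_left_cancel₀ (mul_pos p1 p2).ne'; linarith
  exact algebra_final ha hu hb hv he r1 r2 r3

theorem bh_identifiable (a a' b a1 a1' b1 : ℝ)
    (ha : 0 < a) (ha' : 0 < a') (hb : 0 < b)
    (ha1 : 0 < a1) (ha1' : 0 < a1') (hb1 : 0 < b1)
    (h : bhMeasure a a' b = bhMeasure a1 a1' b1) :
    (a, a', b) = (a1, a1', b1) := by
  have e : a = a1 := le_antisymm (not_lt.1 (not_lt_a ha ha' hb ha1 ha1' hb1 h))
    (not_lt.1 (not_lt_a ha1 ha1' hb1 ha ha' hb h.symm))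
  subst e
  have hk := key_eq ha ha' hb ha1' hb1 h
  obtain ⟨h1, h2, h3⟩ := coeff_unique
    (expand_mul (expand_pow b) (expand_F21 ha hb (add_pos ha ha')))
    (expand_mul (expand_pow b1) (expand_F21 ha hb1 (add_pos ha ha1'))) hk
  obtain ⟨r1, r2⟩ := coeffs_final ha ha' hb ha1' hb1 h1 h2 h3
  rw [r1, r2]
end
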